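/- arXiv:1410.0645 — 5 statements merged into one kernel-verified Lean document; each statement's English description precedes it below -/
import Mathlib

section
/- Fix matrices X₁, X₂, X₃, X₄, Y₁, Y₂, Y₃, Y₄ ∈ M₂(ℂ) and complex numbers f, fₓ ∈ ℂ (representing the values of the coefficient function f and its x-derivative at a point, with Yᵢ the x-derivatives of the Xᵢ). Define, for q, r ∈ ℂ, ξ(q,r) = −i fₓ (X₂ + r X₄) − i f (Y₂ + r Y₄) + i f [X₁,X₂] + i f r [X₁,X₄] − i f r [X₂,X₃] + i f r² [X₃,X₄] and η(q,r) = i fₓ (X₃ + q X₄) + i f (Y₃ + q Y₄) − i f [X₁,X₃] − i f q [X₁,X₄] − i f q [X₂,X₃] − i f q² [X₂,X₄]. Then the cross-derivative consistency condition ∂ξ/∂r (q,r) = ∂η/∂q (q,r) holds for all q, r ∈ ℂ if and only if fₓ X₄ + f Y₄ − f [X₁,X₄] = 0, f [X₃,X₄] = 0, and f [X₂,X₄] = 0. -/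
open Complex

attribute [local instance] Matrix.normedAddCommGroup Matrix.normedSpace

/-- The matrix commutator `[A,B] = AB - BA`. -/
noncomputable def matComm (A B : Matrix (Fin 2) (Fin 2) ℂ) : Matrix (Fin 2) (Fin 2) ℂ :=
  A * B - B * A

/-! The function `ξ` depends on `r` alone and `η` on `q` alone, and both are quadratic. Hence
`∂ξ/∂r - ∂η/∂q` is an affine function of `(q, r)`; the contributions of `[X₂, X₃]` cancel, and up to
a factor `±2i` its constant term and its slopes are the three expressions of the criterion, so it
vanishes identically exactly when these do. -/

theorem forall_smul_add_smul_eq_iff {R M : Type*} [Semiring R] [AddCommMonoid M] [Module R M]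
    {a b c : M} : (∀ s t : R, s • b + t • c = a) ↔ a = 0 ∧ b = 0 ∧ c = 0 := by
  constructor
  · intro h
    have ha : a = 0 := by simpa using (h 0 0).symm
    have hb : b = a := by simpa using h 1 0
    have hc : c = a := by simpa using h 0 1
    exact ⟨ha, hb.trans ha, hc.trans ha⟩
  · rintro ⟨rfl, rfl, rfl⟩ s t
    simp

theorem hasDerivAt_add_smul_add_sq_smul {𝕜 E : Type*} [NontriviallyNormedField 𝕜]
    [NormedAddCommGroup E] [NormedSpace 𝕜 E] (a b c : E) (t : 𝕜) :
    HasDerivAt (fun s : 𝕜 => a + s • b + s ^ 2 • c) (b + (2 * t) • c) t := by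
  have linear : HasDerivAt (fun s : 𝕜 => s • b) b t := by
    simpa using (hasDerivAt_id t).smul_const b
  have quadratic : HasDerivAt (fun s : 𝕜 => s ^ 2 • c) ((2 * t) • c) t := by
    simpa using (hasDerivAt_pow 2 t).smul_const c
  exact (linear.const_add a).fun_add quadratic

section

variable {E : Type*} [NormedAddCommGroup E] [NormedSpace ℂ E] [Bracket E E]

/-- The right-hand side `ξ` of `K⁰_q = ξ`, as a function of `r`; it does not depend on `q`. The
commutator is replaced by an arbitrary bracket on a complex normed space. -/
noncomputable def vcNLSXi (X₁ X₂ X₃ X₄ Y₂ Y₄ : E) (f fx r : ℂ) : E :=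
  (-(I * fx)) • (X₂ + r • X₄) - (I * f) • (Y₂ + r • Y₄)
    + (I * f) • ⁅X₁, X₂⁆ + (I * f * r) • ⁅X₁, X₄⁆
    - (I * f * r) • ⁅X₂, X₃⁆ + (I * f * r ^ 2) • ⁅X₃, X₄⁆

/-- The right-hand side `η` of `K⁰_r = η`, as a function of `q`; it does not depend on `r`. The
commutator is replaced by an arbitrary bracket on a complex normed space. -/
noncomputable def vcNLSEta (X₁ X₂ X₃ X₄ Y₃ Y₄ : E) (f fx q : ℂ) : E :=
  (I * fx) • (X₃ + q • X₄) + (I * f) • (Y₃ + q • Y₄)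
    - (I * f) • ⁅X₁, X₃⁆ - (I * f * q) • ⁅X₁, X₄⁆
    - (I * f * q) • ⁅X₂, X₃⁆ - (I * f * q ^ 2) • ⁅X₂, X₄⁆

theorem vcNLSXi_eq_add_smul_add_sq_smul (X₁ X₂ X₃ X₄ Y₂ Y₄ : E) (f fx r : ℂ) :
    vcNLSXi X₁ X₂ X₃ X₄ Y₂ Y₄ f fx r =
      -I • (fx • X₂ + f • Y₂ - f • ⁅X₁, X₂⁆)
        + r • (-I • (f • ⁅X₂, X₃⁆ + (fx • X₄ + f • Y₄ - f • ⁅X₁, X₄⁆)))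
        + r ^ 2 • (I • f • ⁅X₃, X₄⁆) := by
  unfold vcNLSXi
  module

theorem vcNLSEta_eq_add_smul_add_sq_smul (X₁ X₂ X₃ X₄ Y₃ Y₄ : E) (f fx q : ℂ) :
    vcNLSEta X₁ X₂ X₃ X₄ Y₃ Y₄ f fx q =
      I • (fx • X₃ + f • Y₃ - f • ⁅X₁, X₃⁆)
        + q • (-I • (f • ⁅X₂, X₃⁆ - (fx • X₄ + f • Y₄ - f • ⁅X₁, X₄⁆)))
        + q ^ 2 • (-I • f • ⁅X₂, X₄⁆) := by
  unfold vcNLSEta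
  module

theorem deriv_vcNLSXi (X₁ X₂ X₃ X₄ Y₂ Y₄ : E) (f fx r : ℂ) :
    deriv (vcNLSXi X₁ X₂ X₃ X₄ Y₂ Y₄ f fx) r =
      -I • (f • ⁅X₂, X₃⁆ + (fx • X₄ + f • Y₄ - f • ⁅X₁, X₄⁆))
        + (2 * r) • (I • f • ⁅X₃, X₄⁆) := by
  rw [funext (vcNLSXi_eq_add_smul_add_sq_smul X₁ X₂ X₃ X₄ Y₂ Y₄ f fx)]
  exact (hasDerivAt_add_smul_add_sq_smul _ _ _ r).deriv

theorem deriv_vcNLSEta (X₁ X₂ X₃ X₄ Y₃ Y₄ : E) (f fx q : ℂ) :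
    deriv (vcNLSEta X₁ X₂ X₃ X₄ Y₃ Y₄ f fx) q =
      -I • (f • ⁅X₂, X₃⁆ - (fx • X₄ + f • Y₄ - f • ⁅X₁, X₄⁆))
        + (2 * q) • (-I • f • ⁅X₂, X₄⁆) := by
  rw [funext (vcNLSEta_eq_add_smul_add_sq_smul X₁ X₂ X₃ X₄ Y₃ Y₄ f fx)]
  exact (hasDerivAt_add_smul_add_sq_smul _ _ _ q).deriv

theorem deriv_vcNLSXi_eq_deriv_vcNLSEta_iff (X₁ X₂ X₃ X₄ Y₂ Y₃ Y₄ : E) (f fx q r : ℂ) :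
    deriv (vcNLSXi X₁ X₂ X₃ X₄ Y₂ Y₄ f fx) r = deriv (vcNLSEta X₁ X₂ X₃ X₄ Y₃ Y₄ f fx) q ↔
      q • f • ⁅X₂, X₄⁆ + r • f • ⁅X₃, X₄⁆ = fx • X₄ + f • Y₄ - f • ⁅X₁, X₄⁆ := by
  have sub_eq : deriv (vcNLSXi X₁ X₂ X₃ X₄ Y₂ Y₄ f fx) r
        - deriv (vcNLSEta X₁ X₂ X₃ X₄ Y₃ Y₄ f fx) q =
      (2 * I) • (q • f • ⁅X₂, X₄⁆ + r • f • ⁅X₃, X₄⁆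
        - (fx • X₄ + f • Y₄ - f • ⁅X₁, X₄⁆)) := by
    rw [deriv_vcNLSXi, deriv_vcNLSEta]
    module
  have two_mul_I_ne_zero : 2 * I ≠ 0 := mul_ne_zero two_ne_zero I_ne_zero
  rw [← sub_eq_zero, sub_eq, smul_eq_zero_iff_right two_mul_I_ne_zero, sub_eq_zero]

theorem vcNLS_consistency_general (X₁ X₂ X₃ X₄ Y₂ Y₃ Y₄ : E) (f fx : ℂ) :
    (∀ q r : ℂ,
      deriv (vcNLSXi X₁ X₂ X₃ X₄ Y₂ Y₄ f fx) r = deriv (vcNLSEta X₁ X₂ X₃ X₄ Y₃ Y₄ f fx) q)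
    ↔ (fx • X₄ + f • Y₄ - f • ⁅X₁, X₄⁆ = 0 ∧ f • ⁅X₃, X₄⁆ = 0 ∧ f • ⁅X₂, X₄⁆ = 0) := by
  simp only [deriv_vcNLSXi_eq_deriv_vcNLSEta_iff]
  rw [forall_smul_add_smul_eq_iff, and_comm (a := f • ⁅X₂, X₄⁆ = 0)]

end

/-- Consistency condition `ξ_r = η_q` (for solvability of `K⁰_q = ξ`, `K⁰_r = η`)
in the extended Estabrook-Wahlquist analysis of the variable-coefficient NLS:
it holds for all `q, r` iff `fₓ X₄ + f Y₄ − f [X₁,X₄] = 0`, `f [X₃,X₄] = 0` and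
`f [X₂,X₄] = 0`. -/
theorem vcNLS_consistency (X₁ X₂ X₃ X₄ Y₁ Y₂ Y₃ Y₄ : Matrix (Fin 2) (Fin 2) ℂ)
    (f fx : ℂ) :
    (∀ q r : ℂ,
      deriv (fun r' : ℂ =>
          (-(I * fx)) • (X₂ + r' • X₄) - (I * f) • (Y₂ + r' • Y₄)
            + (I * f) • matComm X₁ X₂ + (I * f * r') • matComm X₁ X₄
            - (I * f * r') • matComm X₂ X₃ + (I * f * r' ^ 2) • matComm X₃ X₄) r
        = deriv (fun q' : ℂ =>
          (I * fx) • (X₃ + q' • X₄) + (I * f) • (Y₃ + q' • Y₄)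
            - (I * f) • matComm X₁ X₃ - (I * f * q') • matComm X₁ X₄
            - (I * f * q') • matComm X₂ X₃ - (I * f * q' ^ 2) • matComm X₂ X₄) q)
    ↔ (fx • X₄ + f • Y₄ - f • matComm X₁ X₄ = 0
        ∧ f • matComm X₃ X₄ = 0 ∧ f • matComm X₂ X₄ = 0) :=
  vcNLS_consistency_general X₁ X₂ X₃ X₄ Y₂ Y₃ Y₄ f fx
end

section
/- Fix matrices X₁, X₂, X₃, X₄, Z₂, Z₃, Z₄ ∈ M₂(ℂ) and complex numbers a₁, a₂ ∈ ℂ (with Zᵢ representing the value of (a₁Xᵢ)_x at a point). Define, for q, r ∈ ℂ, ξ(q,r) = −a₂ X₃ q² − a₂ X₄ q² r + i Z₂ + i Z₄ q − i a₁ [X₁,X₂] − i a₁ [X₁,X₄] q − i a₁ [X₃,X₂] q − i a₁ [X₃,X₄] q² − 2 a₂ X₂ r q − 2 a₂ X₄ q² r and η(q,r) = −a₂ X₂ r² − a₂ X₄ r² q − i Z₃ − i Z₄ r + i a₁ [X₁,X₃] + i a₁ [X₁,X₄] r + i a₁ [X₂,X₃] r + i a₁ [X₂,X₄] r² − 2 a₂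 X₃ r q − 2 a₂ X₄ r² q. Then the cross-derivative consistency condition ∂ξ/∂q (q,r) = ∂η/∂r (q,r) holds for all q, r ∈ ℂ if and only if Z₄ − a₁ [X₁,X₄] = 0, a₁ [X₃,X₄] = 0, and a₁ [X₂,X₄] = 0. -/
open Complex

attribute [local instance] Matrix.normedAddCommGroup Matrix.normedSpace

/-!
For fixed `r`, `ξ` is a quadratic polynomial in `q`; for fixed `q`, `η` is one in `r`. Hence `ξ_q`
and `η_r` can be read off from their coefficients. The terms containing `a₂` cancel in the
difference, and so do those in `[X₃,X₂]` and `[X₂,X₃]`, because the bracket is skew. What remains is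
`2i` times a polynomial of degree at most one in `q` and `r`, with coefficients `Z₄ - a₁[X₁,X₄]`,
`-a₁[X₃,X₄]` and `-a₁[X₂,X₄]`; it vanishes identically iff each coefficient does.
-/

section Derivative

variable {𝕜 F : Type*} [NontriviallyNormedField 𝕜] [AddCommGroup F] [Module 𝕜 F]
  [TopologicalSpace F] [ContinuousSMul 𝕜 F]

open Asymptotics Filter Topology in
theorem hasDerivAt_add_smul_add_sq_smul_s6 (A B C : F) (z : 𝕜) :
    HasDerivAt (fun w : 𝕜 => A + w • B + w ^ 2 • C) (B + (2 * z) • C) z := by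
  have remainder_eq (w : 𝕜) :
      A + w • B + w ^ 2 • C - (A + z • B + z ^ 2 • C) - (w - z) • (B + (2 * z) • C) =
        (w - z) ^ 2 • C := by
    module
  have remainder_isLittleO :
      (fun w : 𝕜 => (w - z) ^ 2 • C) =o[𝕜; 𝓝 z] fun w => w - z := by
    rw [isLittleOTVS_iff_tendsto_inv_smul (.of_forall fun w hw => by simp [hw])]
    have quotient_eq (w : 𝕜) : (w - z)⁻¹ • (w - z) ^ 2 • C = (w - z) • C := by
      rcases eq_or_ne (w - z) 0 with h | h
      · simp [h]
      · rw [smul_smul, sq, inv_mul_cancel_left₀ h]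
    simp only [quotient_eq]
    exact Continuous.tendsto' (by fun_prop) z 0 (by simp)
  rw [hasDerivAt_iff_hasFDerivAt, hasFDerivAt_iff_isLittleOTVS]
  simpa only [ContinuousLinearMap.toSpanSingleton_apply, remainder_eq] using remainder_isLittleO

theorem deriv_add_smul_add_sq_smul [ContinuousAdd F] [T2Space F] (A B C : F) (z : 𝕜) :
    deriv (fun w : 𝕜 => A + w • B + w ^ 2 • C) z = B + (2 * z) • C := by
  simp [deriv, (hasDerivAt_add_smul_add_sq_smul_s6 A B C z).hasFDerivAt.fderiv]

end Derivative

theorem forall_sub_smul_sub_smul_eq_zero_iff {R M : Type*} [Semiring R] [AddCommGroup M]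
    [Module R M] {A B C : M} :
    (∀ q r : R, A - q • B - r • C = 0) ↔ A = 0 ∧ B = 0 ∧ C = 0 := by
  constructor
  · intro h
    have hA : A = 0 := by simpa using h 0 0
    have hB : B = 0 := by simpa [hA] using h 1 0
    have hC : C = 0 := by simpa [hA] using h 0 1
    exact ⟨hA, hB, hC⟩
  · rintro ⟨rfl, rfl, rfl⟩
    simp

section Prolongation

variable {L : Type*} [LieRing L] [Module ℂ L]

/-- The right-hand side `ξ` of the prolongation equation `K⁰_r = ξ`, with values in a Lie ring
that is a complex vector space; `Zᵢ` stands for the value of `(a₁Xᵢ)_x` at a point. -/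
noncomputable def prolongationXi (X₁ X₂ X₃ X₄ Z₂ Z₄ : L) (a₁ a₂ q r : ℂ) : L :=
  (-(a₂ * q ^ 2)) • X₃ - (a₂ * q ^ 2 * r) • X₄ + I • Z₂ + (I * q) • Z₄
    - (I * a₁) • ⁅X₁, X₂⁆ - (I * a₁ * q) • ⁅X₁, X₄⁆
    - (I * a₁ * q) • ⁅X₃, X₂⁆ - (I * a₁ * q ^ 2) • ⁅X₃, X₄⁆
    - (2 * a₂ * r * q) • X₂ - (2 * a₂ * q ^ 2 * r) • X₄

/-- The right-hand side `η` of the prolongation equation `K⁰_q = η`, with values in a Lie ring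
that is a complex vector space; `Zᵢ` stands for the value of `(a₁Xᵢ)_x` at a point. -/
noncomputable def prolongationEta (X₁ X₂ X₃ X₄ Z₃ Z₄ : L) (a₁ a₂ q r : ℂ) : L :=
  (-(a₂ * r ^ 2)) • X₂ - (a₂ * r ^ 2 * q) • X₄ - I • Z₃ - (I * r) • Z₄
    + (I * a₁) • ⁅X₁, X₃⁆ + (I * a₁ * r) • ⁅X₁, X₄⁆
    + (I * a₁ * r) • ⁅X₂, X₃⁆ + (I * a₁ * r ^ 2) • ⁅X₂, X₄⁆
    - (2 * a₂ * r * q) • X₃ - (2 * a₂ * r ^ 2 * q) • X₄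

variable [TopologicalSpace L] [ContinuousAdd L] [ContinuousSMul ℂ L] [T2Space L]

theorem deriv_prolongationXi (X₁ X₂ X₃ X₄ Z₂ Z₄ : L) (a₁ a₂ q r : ℂ) :
    deriv (fun q' => prolongationXi X₁ X₂ X₃ X₄ Z₂ Z₄ a₁ a₂ q' r) q =
      I • Z₄ - (I * a₁) • ⁅X₁, X₄⁆ - (I * a₁) • ⁅X₃, X₂⁆ - (2 * a₂ * r) • X₂
        + (2 * q) • (-(a₂ • X₃) - (3 * a₂ * r) • X₄ - (I * a₁) • ⁅X₃, X₄⁆) := by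
  rw [← deriv_add_smul_add_sq_smul (I • Z₂ - (I * a₁) • ⁅X₁, X₂⁆)]
  congr 1 with q'
  unfold prolongationXi
  module

theorem deriv_prolongationEta (X₁ X₂ X₃ X₄ Z₃ Z₄ : L) (a₁ a₂ q r : ℂ) :
    deriv (fun r' => prolongationEta X₁ X₂ X₃ X₄ Z₃ Z₄ a₁ a₂ q r') r =
      -(I • Z₄) + (I * a₁) • ⁅X₁, X₄⁆ + (I * a₁) • ⁅X₂, X₃⁆ - (2 * a₂ * q) • X₃
        + (2 * r) • (-(a₂ • X₂) - (3 * a₂ * q) • X₄ + (I * a₁) • ⁅X₂, X₄⁆) := by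
  rw [← deriv_add_smul_add_sq_smul (-(I • Z₃) + (I * a₁) • ⁅X₁, X₃⁆)]
  congr 1 with r'
  unfold prolongationEta
  module

theorem deriv_prolongationXi_sub_deriv_prolongationEta (X₁ X₂ X₃ X₄ Z₂ Z₃ Z₄ : L)
    (a₁ a₂ q r : ℂ) :
    deriv (fun q' => prolongationXi X₁ X₂ X₃ X₄ Z₂ Z₄ a₁ a₂ q' r) q
        - deriv (fun r' => prolongationEta X₁ X₂ X₃ X₄ Z₃ Z₄ a₁ a₂ q r') r =
      (2 * I) • (Z₄ - a₁ • ⁅X₁, X₄⁆ - q • a₁ • ⁅X₃, X₄⁆ - r • a₁ • ⁅X₂, X₄⁆) := by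
  rw [deriv_prolongationXi, deriv_prolongationEta, ← lie_skew X₃ X₂]
  module

theorem vcDNLS_consistency_general (X₁ X₂ X₃ X₄ Z₂ Z₃ Z₄ : L) (a₁ a₂ : ℂ) :
    (∀ q r : ℂ,
      deriv (fun q' => prolongationXi X₁ X₂ X₃ X₄ Z₂ Z₄ a₁ a₂ q' r) q
        = deriv (fun r' => prolongationEta X₁ X₂ X₃ X₄ Z₃ Z₄ a₁ a₂ q r') r)
    ↔ (Z₄ - a₁ • ⁅X₁, X₄⁆ = 0 ∧ a₁ • ⁅X₃, X₄⁆ = 0 ∧ a₁ • ⁅X₂, X₄⁆ = 0) := by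
  have two_I_ne_zero : 2 * I ≠ 0 := mul_ne_zero two_ne_zero I_ne_zero
  rw [← forall_sub_smul_sub_smul_eq_zero_iff (R := ℂ)]
  refine forall₂_congr fun q r => ?_
  rw [← sub_eq_zero, deriv_prolongationXi_sub_deriv_prolongationEta,
    smul_eq_zero_iff_right two_I_ne_zero]

end Prolongation

/-- Consistency condition `ξ_q = η_r` (for solvability of `K⁰_r = ξ`, `K⁰_q = η`)
in the extended Estabrook-Wahlquist analysis of the variable-coefficient DNLS:
it holds for all `q, r` iff `Z₄ − a₁ [X₁,X₄] = 0`, `a₁ [X₃,X₄] = 0` and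
`a₁ [X₂,X₄] = 0`. -/
theorem vcDNLS_consistency (X₁ X₂ X₃ X₄ Z₂ Z₃ Z₄ : Matrix (Fin 2) (Fin 2) ℂ)
    (a₁ a₂ : ℂ) :
    (∀ q r : ℂ,
      deriv (fun q' : ℂ =>
          (-(a₂ * q' ^ 2)) • X₃ - (a₂ * q' ^ 2 * r) • X₄ + I • Z₂ + (I * q') • Z₄
            - (I * a₁) • matComm X₁ X₂ - (I * a₁ * q') • matComm X₁ X₄
            - (I * a₁ * q') • matComm X₃ X₂ - (I * a₁ * q' ^ 2) • matComm X₃ X₄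
            - (2 * a₂ * r * q') • X₂ - (2 * a₂ * q' ^ 2 * r) • X₄) q
        = deriv (fun r' : ℂ =>
          (-(a₂ * r' ^ 2)) • X₂ - (a₂ * r' ^ 2 * q) • X₄ - I • Z₃ - (I * r') • Z₄
            + (I * a₁) • matComm X₁ X₃ + (I * a₁ * r') • matComm X₁ X₄
            + (I * a₁ * r') • matComm X₂ X₃ + (I * a₁ * r' ^ 2) • matComm X₂ X₄
            - (2 * a₂ * r' * q) • X₃ - (2 * a₂ * r' ^ 2 * q) • X₄) r)
    ↔ (Z₄ - a₁ • matComm X₁ X₄ = 0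
        ∧ a₁ • matComm X₃ X₄ = 0 ∧ a₁ • matComm X₂ X₄ = 0) := by
  let _ : LieRing (Matrix (Fin 2) (Fin 2) ℂ) := LieRing.ofAssociativeRing
  exact vcDNLS_consistency_general X₁ X₂ X₃ X₄ Z₂ Z₃ Z₄ a₁ a₂
end

section
/- Let f, g, v, γ : ℝ² → ℂ be smooth and let X₀, X₁, X₂, X₃ : ℝ² → M₂(ℂ) be smooth matrix-valued functions satisfying, at every point of ℝ²: (i) X₁_t − X₀_x + [X₁,X₀] = 0; (ii) X₂_t + i(v+iγ)X₂ + i(fX₂)_xx − i(f[X₁,X₂])_x − i fₓ[X₁,X₂] − i f[X₁,X₂ₓ] + i f[X₁,[X₁,X₂]] + [X₂,X₀] = 0; (iii) X₃_t − i(v−iγ)X₃ − i(fX₃)_xx + i(f[X₁,X₃])_x + i fₓ[X₁,X₃] + i f[X₁,X₃ₓ] − i f[X₁,[X₁,X₃]] + [X₃,X₀] = 0; (iv) 2i(f[X₂,X₃])_x − i f[X₁,[X₂,X₃]] + i fₓ[X₂,X₃] − i f[X₂,[X₁,X₃]] + i f[X₃,[X₁,X₂]] = 0; (v) f([X₂,X₂ₓ]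 − [X₂,[X₁,X₂]]) = 0; (vi) f([X₃,X₃ₓ] − [X₃,[X₁,X₃]]) = 0; (vii) g X₂ − f[X₂,[X₂,X₃]] = 0; (viii) g X₃ + f[X₃,[X₂,X₃]] = 0. Then for every smooth solution q, r : ℝ² → ℂ of the vcNLS system i q_t + f q_xx + g q² r + v q + i γ q = 0, −i r_t + f r_xx + g r² q + v r − i γ r = 0, the matrices F = X₁ + q X₂ + r X₃ and G = i f (q_x X₂ − r_x X₃) + i fₓ (r X₃ − q X₂) + i f (r X₃ₓ − q X₂ₓ) + i f q [X₁,X₂] − i f r [X₁,X₃] − i f q r [X₂,X₃] + X₀ satisfy the zero-curvature condition F_t − G_x + [F,G] = 0 identically on ℝ². -/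
/-!
Put `∇Y = Yₓ - [X₁, Y]`. Then `F = X₁ + q X₂ + r X₃`, and the second matrix is
`G = X₀ + i (W(q, f X₂) - W(r, f X₃) - q r f [X₂, X₃])` with `W(q, Y) = qₓ Y - q ∇Y`.
Since `F_t - Gₓ + [F, G] = F_t - ∇G + [q X₂ + r X₃, G]` and `∇W(q, Y) = qₓₓ Y - q ∇²Y` (the first
order terms cancel as for a Wronskian), the curvature is a polynomial in `q, r` up to the terms
`(q_t - i f qₓₓ) X₂ + (r_t + i f rₓₓ) X₃`. The constraints, which read
`X₂_t + i (v + iγ) X₂ + i ∇²(f X₂) + [X₂, X₀] = 0`,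
`X₃_t - i (v - iγ) X₃ - i ∇²(f X₃) + [X₃, X₀] = 0`,
`∇(f [X₂, X₃]) + [X₂, ∇(f X₃)] + [∇(f X₂), X₃] = 0`, `f [Xⱼ, ∇Xⱼ] = 0` and so on,
leave exactly the vcNLS system as the coefficients of `X₂` and `X₃`.
-/

open Complex

attribute [local instance] Matrix.normedAddCommGroup Matrix.normedSpace

/-- Partial derivative in the first (spatial) variable. -/
noncomputable def Dx {E : Type*} [NormedAddCommGroup E] [NormedSpace ℝ E]
    (F : ℝ × ℝ → E) : ℝ × ℝ → E := fun p => fderiv ℝ F p (1, 0)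

/-- Partial derivative in the second (temporal) variable. -/
noncomputable def Dt {E : Type*} [NormedAddCommGroup E] [NormedSpace ℝ E]
    (F : ℝ × ℝ → E) : ℝ × ℝ → E := fun p => fderiv ℝ F p (0, 1)

lemma bracket_swap {𝕜 E : Type*} [NontriviallyNormedField 𝕜] [NormedAddCommGroup E]
    [NormedSpace 𝕜 E] {B : E →L[𝕜] E →L[𝕜] E} (hB : ∀ y, B y y = 0) (y z : E) :
    B y z = -B z y :=
  (LinearMap.IsAlt.neg (B := B.toLinearMap₁₂) hB z y).symm

section PartialDerivatives

variable {E F H : Type*} [NormedAddCommGroup E] [NormedSpace ℝ E]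
  [NormedAddCommGroup F] [NormedSpace ℝ F] [NormedAddCommGroup H] [NormedSpace ℝ H]
  {Y Z : ℝ × ℝ → E} {p : ℝ × ℝ}

lemma Dx_congr (h : Y =ᶠ[nhds p] Z) : Dx Y p = Dx Z p := by
  simp only [Dx, h.fderiv_eq]

lemma Dx_add (hY : DifferentiableAt ℝ Y p) (hZ : DifferentiableAt ℝ Z p) :
    Dx (fun p' => Y p' + Z p') p = Dx Y p + Dx Z p := by
  simp only [Dx, fderiv_fun_add hY hZ, add_apply]

lemma Dt_add (hY : DifferentiableAt ℝ Y p) (hZ : DifferentiableAt ℝ Z p) :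
    Dt (fun p' => Y p' + Z p') p = Dt Y p + Dt Z p := by
  simp only [Dt, fderiv_fun_add hY hZ, add_apply]

lemma Dx_sub (hY : DifferentiableAt ℝ Y p) (hZ : DifferentiableAt ℝ Z p) :
    Dx (fun p' => Y p' - Z p') p = Dx Y p - Dx Z p := by
  simp only [Dx, fderiv_fun_sub hY hZ, sub_apply]

lemma differentiableAt_Dx (hY : ContDiffAt ℝ 2 Y p) : DifferentiableAt ℝ (Dx Y) p :=
  ((hY.fderiv_right (m := 1) (by norm_num)).differentiableAt one_ne_zero).clm_apply
    (differentiableAt_const _)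

variable {𝕜 : Type*} [NontriviallyNormedField 𝕜] [NormedAlgebra ℝ 𝕜]
  [NormedSpace 𝕜 E] [IsScalarTower ℝ 𝕜 E] [NormedSpace 𝕜 F] [IsScalarTower ℝ 𝕜 F]
  [NormedSpace 𝕜 H] [IsScalarTower ℝ 𝕜 H] {a : ℝ × ℝ → 𝕜}

lemma Dx_smul (ha : DifferentiableAt ℝ a p) (hY : DifferentiableAt ℝ Y p) :
    Dx (fun p' => a p' • Y p') p = a p • Dx Y p + Dx a p • Y p := by
  simp [Dx, fderiv_fun_smul ha hY]

lemma Dt_smul (ha : DifferentiableAt ℝ a p) (hY : DifferentiableAt ℝ Y p) :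
    Dt (fun p' => a p' • Y p') p = a p • Dt Y p + Dt a p • Y p := by
  simp [Dt, fderiv_fun_smul ha hY]

lemma Dx_const_smul (c : 𝕜) (hY : DifferentiableAt ℝ Y p) :
    Dx (fun p' => c • Y p') p = c • Dx Y p := by
  simp [Dx, fderiv_fun_const_smul hY]

lemma differentiableAt_bilinear (B : E →L[𝕜] F →L[𝕜] H) {W : ℝ × ℝ → F}
    (hY : DifferentiableAt ℝ Y p) (hW : DifferentiableAt ℝ W p) :
    DifferentiableAt ℝ (fun p' => B (Y p') (W p')) p :=
  ((B.bilinearRestrictScalars ℝ).hasFDerivAt_of_bilinear hY.hasFDerivAt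
    hW.hasFDerivAt).differentiableAt

lemma Dx_bilinear (B : E →L[𝕜] F →L[𝕜] H) {W : ℝ × ℝ → F}
    (hY : DifferentiableAt ℝ Y p) (hW : DifferentiableAt ℝ W p) :
    Dx (fun p' => B (Y p') (W p')) p = B (Dx Y p) (W p) + B (Y p) (Dx W p) := by
  have h := congr($((B.bilinearRestrictScalars ℝ).fderiv_of_bilinear hY hW) (1, 0))
  rw [add_comm]
  exact h

end PartialDerivatives

section CovariantDerivative

variable {𝕜 E : Type*} [NontriviallyNormedField 𝕜]
  [NormedAddCommGroup E] [NormedSpace ℝ E] [NormedSpace 𝕜 E]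

/-- The covariant `x`-derivative `∇Y = Yₓ - [A, Y]` along the connection form `A`, where the
bracket of the fibre is a continuous bilinear map `B`. -/
noncomputable def covDx (B : E →L[𝕜] E →L[𝕜] E) (A Y : ℝ × ℝ → E) : ℝ × ℝ → E :=
  fun p => Dx Y p - B (A p) (Y p)

variable {B : E →L[𝕜] E →L[𝕜] E} {A Y Z : ℝ × ℝ → E} {a : ℝ × ℝ → 𝕜} {p : ℝ × ℝ}

lemma covDx_congr (h : Y =ᶠ[nhds p] Z) : covDx B A Y p = covDx B A Z p := by
  simp only [covDx, Dx_congr h, h.eq_of_nhds]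

lemma covDx_add (hY : DifferentiableAt ℝ Y p) (hZ : DifferentiableAt ℝ Z p) :
    covDx B A (fun p' => Y p' + Z p') p = covDx B A Y p + covDx B A Z p := by
  simp only [covDx, Dx_add hY hZ, map_add]
  abel

lemma covDx_sub (hY : DifferentiableAt ℝ Y p) (hZ : DifferentiableAt ℝ Z p) :
    covDx B A (fun p' => Y p' - Z p') p = covDx B A Y p - covDx B A Z p := by
  simp only [covDx, Dx_sub hY hZ, map_sub]
  abel

variable [NormedAlgebra ℝ 𝕜]

/-- The Wronskian-type expression `W(q, Y) = qₓ Y - q ∇Y` of a scalar function `q` and a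
section `Y`. -/
noncomputable def covWronskian (B : E →L[𝕜] E →L[𝕜] E) (A : ℝ × ℝ → E) (q : ℝ × ℝ → 𝕜)
    (Y : ℝ × ℝ → E) : ℝ × ℝ → E :=
  fun p => Dx q p • Y p - q p • covDx B A Y p

variable [IsScalarTower ℝ 𝕜 E]

lemma covDx_smul (ha : DifferentiableAt ℝ a p) (hY : DifferentiableAt ℝ Y p) :
    covDx B A (fun p' => a p' • Y p') p = a p • covDx B A Y p + Dx a p • Y p := by
  simp only [covDx, Dx_smul ha hY, map_smul]
  module

lemma covDx_const_smul (c : 𝕜) (hY : DifferentiableAt ℝ Y p) :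
    covDx B A (fun p' => c • Y p') p = c • covDx B A Y p := by
  simp only [covDx, Dx_const_smul c hY, map_smul, smul_sub]

lemma differentiableAt_covDx (hA : DifferentiableAt ℝ A p) (hY : ContDiffAt ℝ 2 Y p) :
    DifferentiableAt ℝ (covDx B A Y) p :=
  (differentiableAt_Dx hY).fun_sub
    (differentiableAt_bilinear B hA (hY.differentiableAt two_ne_zero))

lemma differentiableAt_covWronskian (hA : DifferentiableAt ℝ A p) (ha : ContDiffAt ℝ 2 a p)
    (hY : ContDiffAt ℝ 2 Y p) : DifferentiableAt ℝ (covWronskian B A a Y) p :=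
  ((differentiableAt_Dx ha).fun_smul (hY.differentiableAt two_ne_zero)).fun_sub
    ((ha.differentiableAt two_ne_zero).fun_smul (differentiableAt_covDx hA hY))

lemma covDx_covWronskian (hA : DifferentiableAt ℝ A p) (ha : ContDiffAt ℝ 2 a p)
    (hY : ContDiffAt ℝ 2 Y p) :
    covDx B A (covWronskian B A a Y) p
      = Dx (Dx a) p • Y p - a p • covDx B A (covDx B A Y) p := by
  have ha₁ := ha.differentiableAt two_ne_zero
  have hax := differentiableAt_Dx ha
  have hY₁ := hY.differentiableAt two_ne_zero
  have hYx := differentiableAt_covDx (B := B) hA hY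
  unfold covWronskian
  rw [covDx_sub (hax.fun_smul hY₁) (ha₁.fun_smul hYx), covDx_smul hax hY₁, covDx_smul ha₁ hYx]
  abel

lemma covDx_covDx_smul (hA : DifferentiableAt ℝ A p) (ha : ContDiffAt ℝ 2 a p)
    (hY : ContDiffAt ℝ 2 Y p) :
    covDx B A (covDx B A fun p' => a p' • Y p') p
      = Dx (Dx fun p' => a p' • Y p') p - Dx (fun p' => a p' • B (A p') (Y p')) p
        - Dx a p • B (A p) (Y p) - a p • B (A p) (Dx Y p)
        + a p • B (A p) (B (A p) (Y p)) := by
  have ha₁ := ha.differentiableAt two_ne_zero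
  have hY₁ := hY.differentiableAt two_ne_zero
  have haY := ha.smul hY
  have h_unfold : (covDx B A fun p' => a p' • Y p')
      = fun p' => Dx (fun p' => a p' • Y p') p' - a p' • B (A p') (Y p') := by
    funext p'
    simp only [covDx, map_smul]
  have h_outer : Dx (fun p' => Dx (fun p' => a p' • Y p') p' - a p' • B (A p') (Y p')) p
      = Dx (Dx fun p' => a p' • Y p') p - Dx (fun p' => a p' • B (A p') (Y p')) p :=
    Dx_sub (differentiableAt_Dx haY) (ha₁.fun_smul (differentiableAt_bilinear B hA hY₁))
  rw [h_unfold, covDx, h_outer, Dx_smul ha₁ hY₁]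
  simp only [map_sub, map_add, map_smul]
  abel

lemma bracket_covWronskian_smul_self (hB : ∀ y, B y y = 0) (q : ℝ × ℝ → 𝕜)
    (ha : DifferentiableAt ℝ a p) (hY : DifferentiableAt ℝ Y p)
    (h : a p • B (Y p) (covDx B A Y p) = 0) :
    B (Y p) (covWronskian B A q (fun p' => a p' • Y p') p) = 0 := by
  simp only [covWronskian, covDx_smul ha hY, map_sub, map_add, map_smul, hB, h, smul_zero,
    add_zero, sub_zero]

end CovariantDerivative

section VcNLS

/-- The vcNLS system for `(q, r)` at the point `p`. -/
structure VcNLSAt (f g v γ q r : ℝ × ℝ → ℂ) (p : ℝ × ℝ) : Prop where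
  eq_q : I * Dt q p + f p * Dx (Dx q) p + g p * (q p) ^ 2 * r p
    + v p * q p + I * γ p * q p = 0
  eq_r : -I * Dt r p + f p * Dx (Dx r) p + g p * (r p) ^ 2 * q p
    + v p * r p - I * γ p * r p = 0

variable {E : Type*} [NormedAddCommGroup E] [NormedSpace ℝ E] [NormedSpace ℂ E]

/-- The constraints (i)–(viii) of the extended Estabrook–Wahlquist method on the coefficients
`X₀, X₁, X₂, X₃` at the point `p`, with a continuous bilinear map `B` in place of the commutator.
The field names record the monomial in `q`, `r` whose coefficient is made to vanish. -/
structure EstabrookWahlquistAt (B : E →L[ℂ] E →L[ℂ] E) (f g v γ : ℝ × ℝ → ℂ)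
    (X₀ X₁ X₂ X₃ : ℝ × ℝ → E) (p : ℝ × ℝ) : Prop where
  one : Dt X₁ p - Dx X₀ p + B (X₁ p) (X₀ p) = 0
  q : Dt X₂ p + (I * (v p + I * γ p)) • X₂ p
    + I • Dx (Dx (fun p' => f p' • X₂ p')) p
    - I • Dx (fun p' => f p' • B (X₁ p') (X₂ p')) p
    - (I * Dx f p) • B (X₁ p) (X₂ p)
    - (I * f p) • B (X₁ p) (Dx X₂ p)
    + (I * f p) • B (X₁ p) (B (X₁ p) (X₂ p))
    + B (X₂ p) (X₀ p) = 0
  r : Dt X₃ p - (I * (v p - I * γ p)) • X₃ p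
    - I • Dx (Dx (fun p' => f p' • X₃ p')) p
    + I • Dx (fun p' => f p' • B (X₁ p') (X₃ p')) p
    + (I * Dx f p) • B (X₁ p) (X₃ p)
    + (I * f p) • B (X₁ p) (Dx X₃ p)
    - (I * f p) • B (X₁ p) (B (X₁ p) (X₃ p))
    + B (X₃ p) (X₀ p) = 0
  q_mul_r : (2 * I) • Dx (fun p' => f p' • B (X₂ p') (X₃ p')) p
    - (I * f p) • B (X₁ p) (B (X₂ p) (X₃ p))
    + (I * Dx f p) • B (X₂ p) (X₃ p)
    - (I * f p) • B (X₂ p) (B (X₁ p) (X₃ p))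
    + (I * f p) • B (X₃ p) (B (X₁ p) (X₂ p)) = 0
  q_sq : f p • (B (X₂ p) (Dx X₂ p) - B (X₂ p) (B (X₁ p) (X₂ p))) = 0
  r_sq : f p • (B (X₃ p) (Dx X₃ p) - B (X₃ p) (B (X₁ p) (X₃ p))) = 0
  q_sq_mul_r : g p • X₂ p - f p • B (X₂ p) (B (X₂ p) (X₃ p)) = 0
  q_mul_r_sq : g p • X₃ p + f p • B (X₃ p) (B (X₂ p) (X₃ p)) = 0

/-- The spatial matrix `F` of the Lax pair, with values in the space `E` that stands for the
matrices. -/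
noncomputable def laxF (X₁ X₂ X₃ : ℝ × ℝ → E) (q r : ℝ × ℝ → ℂ) : ℝ × ℝ → E :=
  fun p => X₁ p + q p • X₂ p + r p • X₃ p

/-- The temporal matrix `G` of the Lax pair, with a continuous bilinear map `B` in place of the
commutator. -/
noncomputable def laxG (B : E →L[ℂ] E →L[ℂ] E) (f : ℝ × ℝ → ℂ) (X₀ X₁ X₂ X₃ : ℝ × ℝ → E)
    (q r : ℝ × ℝ → ℂ) : ℝ × ℝ → E := fun p =>
  (I * f p) • (Dx q p • X₂ p - Dx r p • X₃ p)
    + (I * Dx f p) • (r p • X₃ p - q p • X₂ p)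
    + (I * f p) • (r p • Dx X₃ p - q p • Dx X₂ p)
    + (I * f p * q p) • B (X₁ p) (X₂ p)
    - (I * f p * r p) • B (X₁ p) (X₃ p)
    - (I * f p * q p * r p) • B (X₂ p) (X₃ p)
    + X₀ p

variable {B : E →L[ℂ] E →L[ℂ] E} {f g v γ q r : ℝ × ℝ → ℂ}
  {X₀ X₁ X₂ X₃ : ℝ × ℝ → E} {p : ℝ × ℝ}

namespace EstabrookWahlquistAt

lemma covariant_q_sq (h : EstabrookWahlquistAt B f g v γ X₀ X₁ X₂ X₃ p) :
    f p • B (X₂ p) (covDx B X₁ X₂ p) = 0 := by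
  simpa only [covDx, map_sub] using h.q_sq

lemma covariant_r_sq (h : EstabrookWahlquistAt B f g v γ X₀ X₁ X₂ X₃ p) :
    f p • B (X₃ p) (covDx B X₁ X₃ p) = 0 := by
  simpa only [covDx, map_sub] using h.r_sq

variable [IsScalarTower ℝ ℂ E]

lemma covariant_q (h : EstabrookWahlquistAt B f g v γ X₀ X₁ X₂ X₃ p)
    (hf : ContDiffAt ℝ 2 f p) (hX₁ : DifferentiableAt ℝ X₁ p) (hX₂ : ContDiffAt ℝ 2 X₂ p) :
    Dt X₂ p + (I * (v p + I * γ p)) • X₂ p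
      + I • covDx B X₁ (covDx B X₁ fun p' => f p' • X₂ p') p + B (X₂ p) (X₀ p) = 0 := by
  rw [covDx_covDx_smul hX₁ hf hX₂]
  linear_combination (norm := module) h.q

lemma covariant_r (h : EstabrookWahlquistAt B f g v γ X₀ X₁ X₂ X₃ p)
    (hf : ContDiffAt ℝ 2 f p) (hX₁ : DifferentiableAt ℝ X₁ p) (hX₃ : ContDiffAt ℝ 2 X₃ p) :
    Dt X₃ p - (I * (v p - I * γ p)) • X₃ p
      - I • covDx B X₁ (covDx B X₁ fun p' => f p' • X₃ p') p + B (X₃ p) (X₀ p) = 0 := by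
  rw [covDx_covDx_smul hX₁ hf hX₃]
  linear_combination (norm := module) h.r

/-- Half of the term `2 i (f [X₂, X₃])ₓ` in (iv) goes into `∇(f [X₂, X₃])`, the other half is
expanded by the Leibniz rule; the Jacobi identity is not involved. -/
lemma covariant_q_mul_r (h : EstabrookWahlquistAt B f g v γ X₀ X₁ X₂ X₃ p)
    (hB : ∀ y, B y y = 0) (hf : DifferentiableAt ℝ f p)
    (hX₂ : DifferentiableAt ℝ X₂ p) (hX₃ : DifferentiableAt ℝ X₃ p) :
    covDx B X₁ (fun p' => f p' • B (X₂ p') (X₃ p')) p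
      + B (X₂ p) (covDx B X₁ (fun p' => f p' • X₃ p') p)
      - B (X₃ p) (covDx B X₁ (fun p' => f p' • X₂ p') p) = 0 := by
  have h_I : I • (covDx B X₁ (fun p' => f p' • B (X₂ p') (X₃ p')) p
      + B (X₂ p) (covDx B X₁ (fun p' => f p' • X₃ p') p)
      - B (X₃ p) (covDx B X₁ (fun p' => f p' • X₂ p') p)) = 0 := by
    have h_leibniz := Dx_smul hf (differentiableAt_bilinear B hX₂ hX₃)
    rw [Dx_bilinear B hX₂ hX₃] at h_leibniz
    have h_iv := h.q_mul_r
    simp only [covDx, h_leibniz, Dx_smul hf hX₂, Dx_smul hf hX₃, map_sub, map_add, map_smul,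
      bracket_swap hB (X₃ p) (X₂ p), bracket_swap hB (X₃ p) (Dx X₂ p)] at h_iv ⊢
    linear_combination (norm := module) h_iv
  exact (smul_eq_zero.mp h_I).resolve_left I_ne_zero

end EstabrookWahlquistAt

variable [IsScalarTower ℝ ℂ E]

lemma laxG_eq_covWronskian (hf : DifferentiableAt ℝ f p) (hX₂ : DifferentiableAt ℝ X₂ p)
    (hX₃ : DifferentiableAt ℝ X₃ p) :
    laxG B f X₀ X₁ X₂ X₃ q r p
      = X₀ p + I • (covWronskian B X₁ q (fun p' => f p' • X₂ p') p
        - covWronskian B X₁ r (fun p' => f p' • X₃ p') p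
        - (q p * r p) • f p • B (X₂ p) (X₃ p)) := by
  simp only [laxG, covWronskian, covDx_smul hf hX₂, covDx_smul hf hX₃]
  simp only [covDx]
  module

lemma covDx_laxG (hf : ContDiffAt ℝ 2 f p) (hX₀ : DifferentiableAt ℝ X₀ p)
    (hX₁ : DifferentiableAt ℝ X₁ p) (hX₂ : ContDiffAt ℝ 2 X₂ p) (hX₃ : ContDiffAt ℝ 2 X₃ p)
    (hq : ContDiffAt ℝ 2 q p) (hr : ContDiffAt ℝ 2 r p) :
    covDx B X₁ (laxG B f X₀ X₁ X₂ X₃ q r) p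
      = covDx B X₁ X₀ p
        + I • (Dx (Dx q) p • f p • X₂ p
            - q p • covDx B X₁ (covDx B X₁ fun p' => f p' • X₂ p') p
          - (Dx (Dx r) p • f p • X₃ p
            - r p • covDx B X₁ (covDx B X₁ fun p' => f p' • X₃ p') p)
          - ((q p * r p) • covDx B X₁ (fun p' => f p' • B (X₂ p') (X₃ p')) p
            + (q p * Dx r p + Dx q p * r p) • f p • B (X₂ p) (X₃ p))) := by
  have hf₁ := hf.differentiableAt two_ne_zero
  have hq₁ := hq.differentiableAt two_ne_zero
  have hr₁ := hr.differentiableAt two_ne_zero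
  have h_nhds : laxG B f X₀ X₁ X₂ X₃ q r =ᶠ[nhds p] fun p' =>
      X₀ p' + I • (covWronskian B X₁ q (fun p' => f p' • X₂ p') p'
        - covWronskian B X₁ r (fun p' => f p' • X₃ p') p'
        - (q p' * r p') • f p' • B (X₂ p') (X₃ p')) := by
    filter_upwards [hf.eventually (by decide), hX₂.eventually (by decide),
      hX₃.eventually (by decide)] with p' hf' hX₂' hX₃'
    exact laxG_eq_covWronskian (hf'.differentiableAt two_ne_zero)
      (hX₂'.differentiableAt two_ne_zero) (hX₃'.differentiableAt two_ne_zero)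
  have hY₂ : ContDiffAt ℝ 2 (fun p' => f p' • X₂ p') p := hf.smul hX₂
  have hY₃ : ContDiffAt ℝ 2 (fun p' => f p' • X₃ p') p := hf.smul hX₃
  have hW₂ := differentiableAt_covWronskian (B := B) hX₁ hq hY₂
  have hW₃ := differentiableAt_covWronskian (B := B) hX₁ hr hY₃
  have hZ : DifferentiableAt ℝ (fun p' => f p' • B (X₂ p') (X₃ p')) p :=
    hf₁.fun_smul (differentiableAt_bilinear B (hX₂.differentiableAt two_ne_zero)
      (hX₃.differentiableAt two_ne_zero))
  have hqrZ := (hq₁.fun_mul hr₁).fun_smul hZ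
  have h_qr : Dx (fun p' => q p' * r p') p = q p * Dx r p + Dx q p * r p := Dx_smul hq₁ hr₁
  rw [covDx_congr h_nhds, covDx_add hX₀ (((hW₂.fun_sub hW₃).fun_sub hqrZ).fun_const_smul I),
    covDx_const_smul I ((hW₂.fun_sub hW₃).fun_sub hqrZ), covDx_sub (hW₂.fun_sub hW₃) hqrZ,
    covDx_sub hW₂ hW₃, covDx_covWronskian hX₁ hq hY₂,
    covDx_covWronskian hX₁ hr hY₃, covDx_smul (hq₁.fun_mul hr₁) hZ, h_qr]

namespace EstabrookWahlquistAt

lemma bracket_X₂_laxG (h : EstabrookWahlquistAt B f g v γ X₀ X₁ X₂ X₃ p)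
    (hB : ∀ y, B y y = 0) (hf : DifferentiableAt ℝ f p)
    (hX₂ : DifferentiableAt ℝ X₂ p) (hX₃ : DifferentiableAt ℝ X₃ p) :
    B (X₂ p) (laxG B f X₀ X₁ X₂ X₃ q r p)
      = B (X₂ p) (X₀ p)
        - I • (Dx r p • f p • B (X₂ p) (X₃ p)
          - r p • B (X₂ p) (covDx B X₁ (fun p' => f p' • X₃ p') p)
          + (q p * r p) • g p • X₂ p) := by
  simp only [laxG_eq_covWronskian hf hX₂ hX₃, map_add, map_sub, map_smul,
    bracket_covWronskian_smul_self hB q hf hX₂ h.covariant_q_sq,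
    sub_eq_zero.mp h.q_sq_mul_r]
  simp only [covWronskian, map_sub, map_smul]
  module

lemma bracket_X₃_laxG (h : EstabrookWahlquistAt B f g v γ X₀ X₁ X₂ X₃ p)
    (hB : ∀ y, B y y = 0) (hf : DifferentiableAt ℝ f p)
    (hX₂ : DifferentiableAt ℝ X₂ p) (hX₃ : DifferentiableAt ℝ X₃ p) :
    B (X₃ p) (laxG B f X₀ X₁ X₂ X₃ q r p)
      = B (X₃ p) (X₀ p)
        + I • (Dx q p • f p • B (X₃ p) (X₂ p)
          - q p • B (X₃ p) (covDx B X₁ (fun p' => f p' • X₂ p') p)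
          + (q p * r p) • g p • X₃ p) := by
  simp only [laxG_eq_covWronskian hf hX₂ hX₃, map_add, map_sub, map_smul,
    bracket_covWronskian_smul_self hB r hf hX₃ h.covariant_r_sq,
    eq_neg_of_add_eq_zero_left h.q_mul_r_sq]
  simp only [covWronskian, map_sub, map_smul]
  module

end EstabrookWahlquistAt

lemma Dt_laxF (hX₁ : DifferentiableAt ℝ X₁ p) (hX₂ : DifferentiableAt ℝ X₂ p)
    (hX₃ : DifferentiableAt ℝ X₃ p) (hq : DifferentiableAt ℝ q p)
    (hr : DifferentiableAt ℝ r p) :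
    Dt (laxF X₁ X₂ X₃ q r) p
      = Dt X₁ p + (q p • Dt X₂ p + Dt q p • X₂ p) + (r p • Dt X₃ p + Dt r p • X₃ p) := by
  unfold laxF
  rw [Dt_add (hX₁.fun_add (hq.fun_smul hX₂)) (hr.fun_smul hX₃), Dt_add hX₁ (hq.fun_smul hX₂),
    Dt_smul hq hX₂, Dt_smul hr hX₃]

theorem vcNLS_zero_curvature_general (hB : ∀ y, B y y = 0) (hf : ContDiffAt ℝ 2 f p)
    (hX₀ : DifferentiableAt ℝ X₀ p) (hX₁ : DifferentiableAt ℝ X₁ p)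
    (hX₂ : ContDiffAt ℝ 2 X₂ p) (hX₃ : ContDiffAt ℝ 2 X₃ p)
    (h : EstabrookWahlquistAt B f g v γ X₀ X₁ X₂ X₃ p)
    (hq : ContDiffAt ℝ 2 q p) (hr : ContDiffAt ℝ 2 r p) (hqr : VcNLSAt f g v γ q r p) :
    Dt (laxF X₁ X₂ X₃ q r) p - Dx (laxG B f X₀ X₁ X₂ X₃ q r) p
      + B (laxF X₁ X₂ X₃ q r p) (laxG B f X₀ X₁ X₂ X₃ q r p) = 0 := by
  have hf₁ := hf.differentiableAt two_ne_zero
  have hX₂₁ := hX₂.differentiableAt two_ne_zero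
  have hX₃₁ := hX₃.differentiableAt two_ne_zero
  have h_covariant : Dt (laxF X₁ X₂ X₃ q r) p - Dx (laxG B f X₀ X₁ X₂ X₃ q r) p
      + B (laxF X₁ X₂ X₃ q r p) (laxG B f X₀ X₁ X₂ X₃ q r p)
      = Dt (laxF X₁ X₂ X₃ q r) p - covDx B X₁ (laxG B f X₀ X₁ X₂ X₃ q r) p
        + q p • B (X₂ p) (laxG B f X₀ X₁ X₂ X₃ q r p)
        + r p • B (X₃ p) (laxG B f X₀ X₁ X₂ X₃ q r p) := by
    simp only [laxF, covDx, map_add, map_smul, add_apply, smul_apply]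
    abel
  have h_qt : Dt q p = I * (f p * Dx (Dx q) p + g p * (q p) ^ 2 * r p
      + v p * q p + I * γ p * q p) := by
    linear_combination (-I) * hqr.eq_q + Dt q p * I_mul_I
  have h_rt : Dt r p = -I * (f p * Dx (Dx r) p + g p * (r p) ^ 2 * q p
      + v p * r p - I * γ p * r p) := by
    linear_combination I * hqr.eq_r + Dt r p * I_mul_I
  have h_one : Dt X₁ p - covDx B X₁ X₀ p = 0 := by
    rw [covDx, ← h.one]
    abel
  rw [h_covariant, Dt_laxF hX₁ hX₂₁ hX₃₁ (hq.differentiableAt two_ne_zero)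
      (hr.differentiableAt two_ne_zero), covDx_laxG hf hX₀ hX₁ hX₂ hX₃ hq hr,
    h.bracket_X₂_laxG hB hf₁ hX₂₁ hX₃₁, h.bracket_X₃_laxG hB hf₁ hX₂₁ hX₃₁,
    bracket_swap hB (X₃ p) (X₂ p), h_qt, h_rt]
  linear_combination (norm := module) h_one + q p • h.covariant_q hf hX₁ hX₂
    + r p • h.covariant_r hf hX₁ hX₃
    + (I * q p * r p) • h.covariant_q_mul_r hB hf₁ hX₂₁ hX₃₁

end VcNLS

/-- The matrix commutator as a continuous `ℂ`-bilinear map. -/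
noncomputable def matCommL :
    Matrix (Fin 2) (Fin 2) ℂ →L[ℂ] Matrix (Fin 2) (Fin 2) ℂ →L[ℂ] Matrix (Fin 2) (Fin 2) ℂ :=
  LinearMap.toContinuousBilinearMap
    (LinearMap.mul ℂ (Matrix (Fin 2) (Fin 2) ℂ) - (LinearMap.mul ℂ (Matrix (Fin 2) (Fin 2) ℂ)).flip)

/-- If the coefficient matrices `X₀, X₁, X₂, X₃` satisfy the eight constraints of the
extended Estabrook-Wahlquist method for the vcNLS system, then for every smooth
solution `(q, r)` of the vcNLS system the matrices `F` and `G` form a Lax pair: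
the zero-curvature condition `F_t − G_x + [F,G] = 0` holds identically. -/
theorem vcNLS_zero_curvature (f g v γ : ℝ × ℝ → ℂ)
    (X₀ X₁ X₂ X₃ : ℝ × ℝ → Matrix (Fin 2) (Fin 2) ℂ)
    (hf : ContDiff ℝ (⊤ : ℕ∞) f) (hg : ContDiff ℝ (⊤ : ℕ∞) g) (hv : ContDiff ℝ (⊤ : ℕ∞) v)
    (hγ : ContDiff ℝ (⊤ : ℕ∞) γ)
    (hX₀ : ContDiff ℝ (⊤ : ℕ∞) X₀) (hX₁ : ContDiff ℝ (⊤ : ℕ∞) X₁) (hX₂ : ContDiff ℝ (⊤ : ℕ∞) X₂)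
    (hX₃ : ContDiff ℝ (⊤ : ℕ∞) X₃)
    (h1 : ∀ p : ℝ × ℝ, Dt X₁ p - Dx X₀ p + matComm (X₁ p) (X₀ p) = 0)
    (h2 : ∀ p : ℝ × ℝ,
      Dt X₂ p + (I * (v p + I * γ p)) • X₂ p
        + I • Dx (Dx (fun p' => f p' • X₂ p')) p
        - I • Dx (fun p' => f p' • matComm (X₁ p') (X₂ p')) p
        - (I * Dx f p) • matComm (X₁ p) (X₂ p)
        - (I * f p) • matComm (X₁ p) (Dx X₂ p)
        + (I * f p) • matComm (X₁ p) (matComm (X₁ p) (X₂ p))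
        + matComm (X₂ p) (X₀ p) = 0)
    (h3 : ∀ p : ℝ × ℝ,
      Dt X₃ p - (I * (v p - I * γ p)) • X₃ p
        - I • Dx (Dx (fun p' => f p' • X₃ p')) p
        + I • Dx (fun p' => f p' • matComm (X₁ p') (X₃ p')) p
        + (I * Dx f p) • matComm (X₁ p) (X₃ p)
        + (I * f p) • matComm (X₁ p) (Dx X₃ p)
        - (I * f p) • matComm (X₁ p) (matComm (X₁ p) (X₃ p))
        + matComm (X₃ p) (X₀ p) = 0)
    (h4 : ∀ p : ℝ × ℝ,
      (2 * I) • Dx (fun p' => f p' • matComm (X₂ p') (X₃ p')) p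
        - (I * f p) • matComm (X₁ p) (matComm (X₂ p) (X₃ p))
        + (I * Dx f p) • matComm (X₂ p) (X₃ p)
        - (I * f p) • matComm (X₂ p) (matComm (X₁ p) (X₃ p))
        + (I * f p) • matComm (X₃ p) (matComm (X₁ p) (X₂ p)) = 0)
    (h5 : ∀ p : ℝ × ℝ,
      f p • (matComm (X₂ p) (Dx X₂ p)
        - matComm (X₂ p) (matComm (X₁ p) (X₂ p))) = 0)
    (h6 : ∀ p : ℝ × ℝ,
      f p • (matComm (X₃ p) (Dx X₃ p)
        - matComm (X₃ p) (matComm (X₁ p) (X₃ p))) = 0)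
    (h7 : ∀ p : ℝ × ℝ,
      g p • X₂ p - f p • matComm (X₂ p) (matComm (X₂ p) (X₃ p)) = 0)
    (h8 : ∀ p : ℝ × ℝ,
      g p • X₃ p + f p • matComm (X₃ p) (matComm (X₂ p) (X₃ p)) = 0)
    (q r : ℝ × ℝ → ℂ) (hq : ContDiff ℝ (⊤ : ℕ∞) q) (hr : ContDiff ℝ (⊤ : ℕ∞) r)
    (heq1 : ∀ p : ℝ × ℝ,
      I * Dt q p + f p * Dx (Dx q) p + g p * (q p) ^ 2 * r p
        + v p * q p + I * γ p * q p = 0)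
    (heq2 : ∀ p : ℝ × ℝ,
      -I * Dt r p + f p * Dx (Dx r) p + g p * (r p) ^ 2 * q p
        + v p * r p - I * γ p * r p = 0)
    (F G : ℝ × ℝ → Matrix (Fin 2) (Fin 2) ℂ)
    (hF : F = fun p => X₁ p + q p • X₂ p + r p • X₃ p)
    (hG : G = fun p =>
      (I * f p) • (Dx q p • X₂ p - Dx r p • X₃ p)
        + (I * Dx f p) • (r p • X₃ p - q p • X₂ p)
        + (I * f p) • (r p • Dx X₃ p - q p • Dx X₂ p)
        + (I * f p * q p) • matComm (X₁ p) (X₂ p)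
        - (I * f p * r p) • matComm (X₁ p) (X₃ p)
        - (I * f p * q p * r p) • matComm (X₂ p) (X₃ p)
        + X₀ p) :
    ∀ p : ℝ × ℝ, Dt F p - Dx G p + matComm (F p) (G p) = 0 := by
  subst hF hG
  have h_two : (2 : WithTop ℕ∞) ≤ (⊤ : ℕ∞) := by norm_cast
  have h_top : ((⊤ : ℕ∞) : WithTop ℕ∞) ≠ 0 := by simp
  exact fun p => vcNLS_zero_curvature_general (B := matCommL) (fun A => sub_self (A * A))
    (hf.of_le h_two).contDiffAt (hX₀.differentiable h_top p) (hX₁.differentiable h_top p)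
    (hX₂.of_le h_two).contDiffAt (hX₃.of_le h_two).contDiffAt
    ⟨h1 p, h2 p, h3 p, h4 p, h5 p, h6 p, h7 p, h8 p⟩
    (hq.of_le h_two).contDiffAt (hr.of_le h_two).contDiffAt ⟨heq1 p, heq2 p⟩
end

section
/- Let a₁, f₁, f₂, f₃, f₄ : ℝ² → ℂ be continuously differentiable, and define X₁ = [[f₁, 0],[0, f₂]], X₂ = [[0, f₃],[0, 0]], X₃ = [[0, 0],[f₄, 0]] on ℝ². Then, at every point of ℝ², the matrix constraint −(a₁[X₂,X₃])ₓ + a₁[X₁,[X₂,X₃]] − [X₂,(a₁X₃)ₓ] + a₁[X₂,[X₁,X₃]] + [X₃,(a₁X₂)ₓ] − a₁[X₃,[X₁,X₂]] = 0 holds if and only if the scalar equation (a₁ f₃ f₄)ₓ + f₃ (a₁ f₄)ₓ + f₄ (a₁ f₃)ₓ = 0 holds. -/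
open Complex

attribute [local instance] Matrix.normedAddCommGroup Matrix.normedSpace

/-!
By the Jacobi identity the terms of the constraint without derivatives add up to
`2 a₁ [X₁, [X₂, X₃]]`, which vanishes on the ansatz because diagonal matrices commute. Writing
`X₂ = f₃ E` and `X₃ = f₄ F` with constant matrices `E` and `F`, each of the three remaining terms
is a scalar multiple of `[E, F] ≠ 0`, and the scalars add up to minus the left-hand side of the
scalar equation.
-/

section LieAlgebra

variable {R L : Type*} [CommRing R] [LieRing L] [LieAlgebra R L]

theorem lie_lie_add_lie_lie_sub_lie_lie (x y z : L) :
    ⁅x, ⁅y, z⁆⁆ + ⁅y, ⁅x, z⁆⁆ - ⁅z, ⁅x, y⁆⁆ = 2 • ⁅x, ⁅y, z⁆⁆ := by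
  rw [← lie_skew z ⁅x, y⁆, leibniz_lie x y z]
  abel

/-- The scalars `s`, `t`, `u` stand for the derivatives of `a * b * c`, `a * c` and `a * b`. -/
theorem lie_constraint_eq_neg_smul_lie {x e f : L} (h : ⁅x, ⁅e, f⁆⁆ = 0) (a b c s t u : R) :
    -(s • ⁅e, f⁆) + a • ⁅x, ⁅b • e, c • f⁆⁆ - ⁅b • e, t • f⁆ + a • ⁅b • e, ⁅x, c • f⁆⁆
        + ⁅c • f, u • e⁆ - a • ⁅c • f, ⁅x, b • e⁆⁆ =
      -(s + b * t + c * u) • ⁅e, f⁆ := by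
  have derivative_free : a • ⁅x, ⁅b • e, c • f⁆⁆ + a • ⁅b • e, ⁅x, c • f⁆⁆
      - a • ⁅c • f, ⁅x, b • e⁆⁆ = 0 := by
    rw [← smul_add, ← smul_sub, lie_lie_add_lie_lie_sub_lie_lie]
    simp only [lie_smul, smul_lie, h, smul_zero]
  have derivative_terms : -(s • ⁅e, f⁆) - ⁅b • e, t • f⁆ + ⁅c • f, u • e⁆ =
      -(s + b * t + c * u) • ⁅e, f⁆ := by
    rw [← lie_skew (c • f) (u • e)]
    simp only [lie_smul, smul_lie]
    module
  linear_combination (norm := abel) derivative_free + derivative_terms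

end LieAlgebra

theorem Dx_smul_const {𝕜 V : Type*} [NormedRing 𝕜] [NormedAlgebra ℝ 𝕜]
    [NormedAddCommGroup V] [NormedSpace ℝ V] [Module 𝕜 V] [IsBoundedSMul 𝕜 V]
    [IsScalarTower ℝ 𝕜 V] {g : ℝ × ℝ → 𝕜} {p : ℝ × ℝ} (hg : DifferentiableAt ℝ g p) (v : V) :
    Dx (fun q => g q • v) p = Dx g p • v := by
  simp only [Dx, fderiv_smul_const hg, ContinuousLinearMap.smulRight_apply]

theorem matComm_smul_smul (a b : ℂ) (A B : Matrix (Fin 2) (Fin 2) ℂ) :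
    matComm (a • A) (b • B) = (a * b) • matComm A B := by
  simp only [matComm, smul_mul_smul_comm, mul_comm b a, smul_sub]

theorem matComm_single_single :
    matComm (Matrix.single 0 1 1) (Matrix.single 1 0 1) = Matrix.diagonal ![1, -1] := by
  ext i j
  fin_cases i <;> fin_cases j <;> simp [matComm]

theorem matComm_single_single_ne_zero :
    matComm (Matrix.single 0 1 1) (Matrix.single 1 0 1) ≠ 0 := by
  simp [matComm_single_single]

theorem matComm_diagonal_matComm_single_single (a b : ℂ) :
    matComm !![a, 0; 0, b] (matComm (Matrix.single 0 1 1) (Matrix.single 1 0 1)) = 0 := by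
  rw [matComm_single_single, ← Matrix.diagonal_vec2]
  exact sub_eq_zero.2 (Matrix.commute_diagonal _ _)

theorem upper_eq_smul_single {R : Type*} [Semiring R] (c : R) :
    !![0, c; 0, 0] = c • Matrix.single (0 : Fin 2) (1 : Fin 2) 1 := by
  ext i j
  fin_cases i <;> fin_cases j <;> simp

theorem lower_eq_smul_single {R : Type*} [Semiring R] (c : R) :
    !![0, 0; c, 0] = c • Matrix.single (1 : Fin 2) (0 : Fin 2) 1 := by
  ext i j
  fin_cases i <;> fin_cases j <;> simp

/-- The left-hand side of the `O(qr)` matrix constraint, for arbitrary matrix functions in place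
of the ansatz. -/
noncomputable def oqrResidual (a₁ : ℝ × ℝ → ℂ) (X₁ X₂ X₃ : ℝ × ℝ → Matrix (Fin 2) (Fin 2) ℂ)
    (p : ℝ × ℝ) : Matrix (Fin 2) (Fin 2) ℂ :=
  -Dx (fun q => a₁ q • matComm (X₂ q) (X₃ q)) p
    + a₁ p • matComm (X₁ p) (matComm (X₂ p) (X₃ p))
    - matComm (X₂ p) (Dx (fun q => a₁ q • X₃ q) p)
    + a₁ p • matComm (X₂ p) (matComm (X₁ p) (X₃ p))
    + matComm (X₃ p) (Dx (fun q => a₁ q • X₂ q) p)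
    - a₁ p • matComm (X₃ p) (matComm (X₁ p) (X₂ p))

section Residual

attribute [local instance] LieRing.ofAssociativeRing

theorem matComm_eq_lie (A B : Matrix (Fin 2) (Fin 2) ℂ) : matComm A B = ⁅A, B⁆ :=
  (Ring.lie_def A B).symm

variable {a₁ f₃ f₄ : ℝ × ℝ → ℂ} {p : ℝ × ℝ} {X₁ X₂ X₃ : ℝ × ℝ → Matrix (Fin 2) (Fin 2) ℂ}
  {E F : Matrix (Fin 2) (Fin 2) ℂ}

theorem oqrResidual_eq_neg_smul_matComm (ha₁ : DifferentiableAt ℝ a₁ p)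
    (hf₃ : DifferentiableAt ℝ f₃ p) (hf₄ : DifferentiableAt ℝ f₄ p)
    (hX₁ : matComm (X₁ p) (matComm E F) = 0)
    (hX₂ : ∀ q, X₂ q = f₃ q • E) (hX₃ : ∀ q, X₃ q = f₄ q • F) :
    oqrResidual a₁ X₁ X₂ X₃ p =
      -(Dx (fun q => a₁ q * f₃ q * f₄ q) p + f₃ p * Dx (fun q => a₁ q * f₄ q) p
        + f₄ p * Dx (fun q => a₁ q * f₃ q) p) • matComm E F := by
  have Dx_comm : Dx (fun q => a₁ q • matComm (X₂ q) (X₃ q)) p =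
      Dx (fun q => a₁ q * f₃ q * f₄ q) p • matComm E F := by
    simp only [hX₂, hX₃, matComm_smul_smul, smul_smul, ← mul_assoc]
    exact Dx_smul_const ((ha₁.fun_mul hf₃).fun_mul hf₄) _
  have Dx_X₂ : Dx (fun q => a₁ q • X₂ q) p = Dx (fun q => a₁ q * f₃ q) p • E := by
    simp only [hX₂, smul_smul, Dx_smul_const (ha₁.fun_mul hf₃)]
  have Dx_X₃ : Dx (fun q => a₁ q • X₃ q) p = Dx (fun q => a₁ q * f₄ q) p • F := by
    simp only [hX₃, smul_smul, Dx_smul_const (ha₁.fun_mul hf₄)]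
  rw [oqrResidual, Dx_comm, Dx_X₂, Dx_X₃, hX₂, hX₃]
  simp only [matComm_eq_lie] at hX₁ ⊢
  exact lie_constraint_eq_neg_smul_lie (L := Matrix (Fin 2) (Fin 2) ℂ) hX₁ ..

theorem vcDNLS_Oqr_constraint_general (ha₁ : DifferentiableAt ℝ a₁ p)
    (hf₃ : DifferentiableAt ℝ f₃ p) (hf₄ : DifferentiableAt ℝ f₄ p)
    (hX₁ : matComm (X₁ p) (matComm E F) = 0) (hX₂ : ∀ q, X₂ q = f₃ q • E)
    (hX₃ : ∀ q, X₃ q = f₄ q • F) (hEF : matComm E F ≠ 0) :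
    oqrResidual a₁ X₁ X₂ X₃ p = 0 ↔
      Dx (fun q => a₁ q * f₃ q * f₄ q) p + f₃ p * Dx (fun q => a₁ q * f₄ q) p
        + f₄ p * Dx (fun q => a₁ q * f₃ q) p = 0 := by
  rw [oqrResidual_eq_neg_smul_matComm ha₁ hf₃ hf₄ hX₁ hX₂ hX₃, smul_eq_zero_iff_left hEF,
    neg_eq_zero]

end Residual

/-- On the 2×2 ansatz `X₁ = diag(f₁,f₂)`, `X₂ = [[0,f₃],[0,0]]`, `X₃ = [[0,0],[f₄,0]]`,
the `O(qr)` matrix constraint of the extended Estabrook-Wahlquist analysis of the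
vcDNLS equation holds at a point iff the scalar equation
`(a₁ f₃ f₄)ₓ + f₃ (a₁ f₄)ₓ + f₄ (a₁ f₃)ₓ = 0` holds there. -/
theorem vcDNLS_Oqr_constraint (a₁ f₁ f₂ f₃ f₄ : ℝ × ℝ → ℂ)
    (ha₁ : ContDiff ℝ 1 a₁) (hf₁ : ContDiff ℝ 1 f₁) (hf₂ : ContDiff ℝ 1 f₂)
    (hf₃ : ContDiff ℝ 1 f₃) (hf₄ : ContDiff ℝ 1 f₄)
    (X₁ X₂ X₃ : ℝ × ℝ → Matrix (Fin 2) (Fin 2) ℂ)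
    (hX₁ : X₁ = fun p => !![f₁ p, 0; 0, f₂ p])
    (hX₂ : X₂ = fun p => !![0, f₃ p; 0, 0])
    (hX₃ : X₃ = fun p => !![0, 0; f₄ p, 0]) :
    ∀ p : ℝ × ℝ,
      (-Dx (fun p' => a₁ p' • matComm (X₂ p') (X₃ p')) p
          + a₁ p • matComm (X₁ p) (matComm (X₂ p) (X₃ p))
          - matComm (X₂ p) (Dx (fun p' => a₁ p' • X₃ p') p)
          + a₁ p • matComm (X₂ p) (matComm (X₁ p) (X₃ p))
          + matComm (X₃ p) (Dx (fun p' => a₁ p' • X₂ p') p)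
          - a₁ p • matComm (X₃ p) (matComm (X₁ p) (X₂ p)) = 0)
      ↔ (Dx (fun p' => a₁ p' * f₃ p' * f₄ p') p
          + f₃ p * Dx (fun p' => a₁ p' * f₄ p') p
          + f₄ p * Dx (fun p' => a₁ p' * f₃ p') p = 0) := by
  intro p
  have hdiag : matComm (X₁ p) (matComm (Matrix.single 0 1 1) (Matrix.single 1 0 1)) = 0 := by
    rw [hX₁, matComm_diagonal_matComm_single_single]
  have hupper (q : ℝ × ℝ) : X₂ q = f₃ q • Matrix.single 0 1 1 :=
    (congrFun hX₂ q).trans (upper_eq_smul_single (f₃ q))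
  have hlower (q : ℝ × ℝ) : X₃ q = f₄ q • Matrix.single 1 0 1 :=
    (congrFun hX₃ q).trans (lower_eq_smul_single (f₄ q))
  exact vcDNLS_Oqr_constraint_general (ha₁.differentiable one_ne_zero p)
    (hf₃.differentiable one_ne_zero p) (hf₄.differentiable one_ne_zero p)
    hdiag hupper hlower matComm_single_single_ne_zero
end

section
/- Let F₂ : ℝ → ℝ be smooth and nowhere zero, let F₃, F₄ : ℝ → ℝ be smooth, let c₁, c₂ ∈ ℝ, and let H₁, H₂ : ℝ → ℝ be antiderivatives satisfying H₁'(x) = x / F₂(x) and H₂'(x) = 1 / F₂(x) for all x. Define a₁(x,t) = F₄(t) F₂(x) (c₁ + c₂ x) − c₁ F₄(t) F₂(x) H₁(x) + c₁ x F₄(t) F₂(x) H₂(x) and a₂(x,t) = F₂(x) F₃(t). Then at every point of ℝ²: (i) a₂_t a₂ₓ − a₂ₓ_t a₂ = 0, and (ii) a₂³ a₁ₓₓₓ − 3 a₂² a₂ₓₓ a₁ₓ − 4 a₂ₓ³ a₁ + 5 a₁ a₂ a₂ₓ a₂ₓₓ + 4 a₂ₓ² a₂ a₁ₓ − a₂²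 a₁ a₂ₓₓₓ − 2 a₂ₓ a₂² a₁ₓₓ = 0. -/
/-!
Write `a₁ = f w F₄` and `a₂ = f F₃` with `f = F₂`. Condition (i) says that the mixed logarithmic
derivative of `a₂` vanishes, which holds because the variables separate. The left-hand side of (ii)
collapses to `F₄ F₃³ f³ (f w'')'`, all terms in `w` and `w'` cancelling; here `w'' = c₁ / f`, so
`f w''` is constant.
-/

theorem contDiff_succ_of_hasDerivAt {𝕜 E : Type*} [NontriviallyNormedField 𝕜]
    [NormedAddCommGroup E] [NormedSpace 𝕜 E] {n : ℕ} {f f' : 𝕜 → E}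
    (hf : ∀ x, HasDerivAt f (f' x) x) (hf' : ContDiff 𝕜 n f') : ContDiff 𝕜 (n + 1) f := by
  rw [← funext fun x ↦ (hf x).deriv] at hf'
  exact contDiff_succ_iff_deriv.2 ⟨fun x ↦ (hf x).differentiableAt, by simp, hf'⟩

theorem differentiableAt_iteratedDeriv {𝕜 E : Type*} [NontriviallyNormedField 𝕜]
    [NormedAddCommGroup E] [NormedSpace 𝕜 E] {f : 𝕜 → E} {x : 𝕜} {n : WithTop ℕ∞} {m : ℕ}
    (hf : ContDiffAt 𝕜 n f x) (hmn : m < n) : DifferentiableAt 𝕜 (iteratedDeriv m f) x := by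
  rw [← iteratedDerivWithin_univ, ← differentiableWithinAt_univ]
  refine hf.contDiffWithinAt.differentiableWithinAt_iteratedDerivWithin hmn ?_
  rw [Set.insert_eq_of_mem (Set.mem_univ x)]
  exact uniqueDiffOn_univ

section PartialDerivatives

variable {E : Type*} [NormedAddCommGroup E] [NormedSpace ℝ E] {F : ℝ × ℝ → E} {p : ℝ × ℝ}

theorem Dx_eq_deriv (hF : DifferentiableAt ℝ F p) : Dx F p = deriv (fun x ↦ F (x, p.2)) p.1 :=
  (hF.hasFDerivAt.comp_hasDerivAt p.1
    ((hasDerivAt_id p.1).prodMk (hasDerivAt_const p.1 p.2))).deriv.symm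

theorem Dt_eq_deriv (hF : DifferentiableAt ℝ F p) : Dt F p = deriv (fun t ↦ F (p.1, t)) p.2 :=
  (hF.hasFDerivAt.comp_hasDerivAt p.2
    ((hasDerivAt_const p.2 p.1).prodMk (hasDerivAt_id p.2))).deriv.symm

end PartialDerivatives

section SeparatedProducts

variable {A : Type*} [NormedRing A] [NormedAlgebra ℝ A] {f g : ℝ → A}

theorem Dx_fst_mul_snd (hf : Differentiable ℝ f) (hg : Differentiable ℝ g) :
    Dx (fun p ↦ f p.1 * g p.2) = fun p ↦ deriv f p.1 * g p.2 := by
  funext p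
  rw [Dx_eq_deriv (by fun_prop)]
  exact deriv_mul_const (hf p.1) (g p.2)

theorem Dt_fst_mul_snd (hf : Differentiable ℝ f) (hg : Differentiable ℝ g) :
    Dt (fun p ↦ f p.1 * g p.2) = fun p ↦ f p.1 * deriv g p.2 := by
  funext p
  rw [Dt_eq_deriv (by fun_prop)]
  exact deriv_const_mul (f p.1) (hg p.2)

theorem Dx_iterate_fst_mul_snd {n : ℕ} (hf : ContDiff ℝ n f) (hg : Differentiable ℝ g) :
    Dx^[n] (fun p ↦ f p.1 * g p.2) = fun p ↦ iteratedDeriv n f p.1 * g p.2 := by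
  induction n with
  | zero => simp only [Function.iterate_zero, id_eq, iteratedDeriv_zero]
  | succ n ih =>
    have hfn : Differentiable ℝ (iteratedDeriv n f) :=
      hf.differentiable_iteratedDeriv n (mod_cast n.lt_succ_self)
    rw [Function.iterate_succ_apply', ih (hf.of_le (mod_cast n.le_succ)),
      Dx_fst_mul_snd hfn hg, iteratedDeriv_succ]

end SeparatedProducts

theorem Dt_mul_Dx_sub_Dt_Dx_mul_eq_zero_of_separated {A : Type*} [NormedCommRing A]
    [NormedAlgebra ℝ A] {f g : ℝ → A} (hf : ContDiff ℝ 2 f) (hg : Differentiable ℝ g)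
    {a : ℝ × ℝ → A} (ha : a = fun p ↦ f p.1 * g p.2) (p : ℝ × ℝ) :
    Dt a p * Dx a p - Dt (Dx a) p * a p = 0 := by
  have hf₀ : Differentiable ℝ f := hf.differentiable two_ne_zero
  have hf₁ : Differentiable ℝ (deriv f) := hf.differentiable_deriv_two
  rw [ha, Dx_fst_mul_snd hf₀ hg, Dt_fst_mul_snd hf₀ hg, Dt_fst_mul_snd hf₁ hg]
  ring

/-- The left-hand side of the integrability condition (ii), as a polynomial in the jets of the
coefficients: `a n` and `b n` stand for the `n`-th spatial derivatives of `a₁` and `a₂` at a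
point. -/
def integrabilityForm {R : Type*} [CommRing R] (a b : ℕ → R) : R :=
  b 0 ^ 3 * a 3 - 3 * b 0 ^ 2 * b 2 * a 1 - 4 * b 1 ^ 3 * a 0 + 5 * a 0 * b 0 * b 1 * b 2
    + 4 * b 1 ^ 2 * b 0 * a 1 - b 0 ^ 2 * a 0 * b 3 - 2 * b 1 * b 0 ^ 2 * a 2

theorem integrabilityForm_iteratedDeriv_mul {𝕜 A : Type*} [NontriviallyNormedField 𝕜]
    [NormedCommRing A] [NormedAlgebra 𝕜 A] {f w : 𝕜 → A} {x : 𝕜} (hf : ContDiffAt 𝕜 3 f x)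
    (hw : ContDiffAt 𝕜 3 w x) :
    integrabilityForm (fun n ↦ iteratedDeriv n (f * w) x) (fun n ↦ iteratedDeriv n f x) =
      f x ^ 3 * deriv (f * iteratedDeriv 2 w) x := by
  have leibniz (n : ℕ) (hn : n ≤ 3) : iteratedDeriv n (f * w) x =
      ∑ i ∈ Finset.range (n + 1), n.choose i * iteratedDeriv i f x * iteratedDeriv (n - i) w x :=
    iteratedDeriv_mul (hf.of_le (mod_cast hn)) (hw.of_le (mod_cast hn))
  have deriv_mul_w₂ : deriv (f * iteratedDeriv 2 w) x =
      deriv f x * iteratedDeriv 2 w x + f x * iteratedDeriv 3 w x := by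
    rw [deriv_mul (hf.differentiableAt three_ne_zero)
      (differentiableAt_iteratedDeriv hw (m := 2) (by norm_num)), iteratedDeriv_succ (n := 2)]
  simp only [integrabilityForm, deriv_mul_w₂, leibniz, Nat.reduceLeDiff]
  simp only [Finset.sum_range_succ, Finset.range_one, Finset.sum_singleton, Nat.choose,
    Nat.reduceAdd, Nat.reduceSub, Nat.add_one_sub_one, Nat.cast_one, Nat.cast_ofNat, one_mul,
    tsub_zero, tsub_self, zero_tsub, zero_add, add_zero, iteratedDeriv_zero, iteratedDeriv_one]
  ring

theorem integrabilityForm_Dx_iterate_fst_mul_snd {A : Type*} [NormedCommRing A] [NormedAlgebra ℝ A]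
    {u f g h : ℝ → A} (hu : ContDiff ℝ 3 u) (hf : ContDiff ℝ 3 f) (hg : Differentiable ℝ g)
    (hh : Differentiable ℝ h) (p : ℝ × ℝ) :
    integrabilityForm (fun n ↦ Dx^[n] (fun p ↦ u p.1 * h p.2) p)
        (fun n ↦ Dx^[n] (fun p ↦ f p.1 * g p.2) p) =
      h p.2 * g p.2 ^ 3 *
        integrabilityForm (fun n ↦ iteratedDeriv n u p.1) (fun n ↦ iteratedDeriv n f p.1) := by
  have Dx_iterate {v k : ℝ → A} (hv : ContDiff ℝ 3 v) (hk : Differentiable ℝ k) (n : ℕ)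
      (hn : n ≤ 3) : Dx^[n] (fun p ↦ v p.1 * k p.2) p = iteratedDeriv n v p.1 * k p.2 :=
    congrFun (Dx_iterate_fst_mul_snd (hv.of_le (mod_cast hn)) hk) p
  simp only [integrabilityForm, Dx_iterate hu hh, Dx_iterate hf hg, Nat.reduceLeDiff]
  ring

/-- The factor `w(x)` in `a₁ = F₂(x) w(x) F₄(t)`, where `H₁` and `H₂` are antiderivatives of
`x / F₂` and `1 / F₂`. -/
def spatialFactor {R : Type*} [CommRing R] (c₁ c₂ : R) (H₁ H₂ : R → R) (x : R) : R :=
  c₁ + c₂ * x - c₁ * H₁ x + c₁ * (x * H₂ x)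

section SpatialFactor

variable {𝕜 : Type*} [NontriviallyNormedField 𝕜] {f H₁ H₂ : 𝕜 → 𝕜} (c₁ c₂ : 𝕜)

theorem hasDerivAt_spatialFactor {x : 𝕜} (hH₁ : HasDerivAt H₁ (x / f x) x)
    (hH₂ : HasDerivAt H₂ (1 / f x) x) :
    HasDerivAt (spatialFactor c₁ c₂ H₁ H₂) (c₂ + c₁ * H₂ x) x := by
  have h : HasDerivAt (spatialFactor c₁ c₂ H₁ H₂)
      (c₂ * 1 - c₁ * (x / f x) + c₁ * (1 * H₂ x + x * (1 / f x))) x :=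
    ((((hasDerivAt_id' x).const_mul c₂).const_add c₁).sub (hH₁.const_mul c₁)).add
      (((hasDerivAt_id' x).mul hH₂).const_mul c₁)
  exact h.congr_deriv (by ring)

theorem iteratedDeriv_two_spatialFactor (hH₁ : ∀ x, HasDerivAt H₁ (x / f x) x)
    (hH₂ : ∀ x, HasDerivAt H₂ (1 / f x) x) :
    iteratedDeriv 2 (spatialFactor c₁ c₂ H₁ H₂) = fun x ↦ c₁ / f x := by
  have deriv_w : deriv (spatialFactor c₁ c₂ H₁ H₂) = fun x ↦ c₂ + c₁ * H₂ x :=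
    funext fun x ↦ (hasDerivAt_spatialFactor c₁ c₂ (hH₁ x) (hH₂ x)).deriv
  funext x
  rw [iteratedDeriv_succ, iteratedDeriv_one, deriv_w,
    (((hH₂ x).const_mul c₁).const_add c₂).deriv, mul_one_div]

theorem mul_iteratedDeriv_two_spatialFactor (hf : ∀ x, f x ≠ 0)
    (hH₁ : ∀ x, HasDerivAt H₁ (x / f x) x) (hH₂ : ∀ x, HasDerivAt H₂ (1 / f x) x) :
    f * iteratedDeriv 2 (spatialFactor c₁ c₂ H₁ H₂) = fun _ ↦ c₁ := by
  funext x
  rw [iteratedDeriv_two_spatialFactor c₁ c₂ hH₁ hH₂, Pi.mul_apply, mul_div_cancel₀ _ (hf x)]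

theorem contDiff_spatialFactor (hf : ContDiff 𝕜 1 f) (hf₀ : ∀ x, f x ≠ 0)
    (hH₁ : ∀ x, HasDerivAt H₁ (x / f x) x) (hH₂ : ∀ x, HasDerivAt H₂ (1 / f x) x) :
    ContDiff 𝕜 3 (spatialFactor c₁ c₂ H₁ H₂) := by
  have hH₂_contDiff : ContDiff 𝕜 2 H₂ :=
    contDiff_succ_of_hasDerivAt (n := 1) hH₂ (contDiff_const.div hf hf₀)
  exact contDiff_succ_of_hasDerivAt (n := 2)
    (fun x ↦ hasDerivAt_spatialFactor c₁ c₂ (hH₁ x) (hH₂ x))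
    (contDiff_const.add (contDiff_const.mul hH₂_contDiff))

end SpatialFactor

theorem vcDNLS_integrability_conditions_general (F₂ F₃ F₄ : ℝ → ℝ) (c₁ c₂ : ℝ)
    (hF₂ : ContDiff ℝ 3 F₂) (hF₃ : Differentiable ℝ F₃) (hF₄ : Differentiable ℝ F₄)
    (hF₂ne : ∀ x : ℝ, F₂ x ≠ 0) (H₁ H₂ : ℝ → ℝ)
    (hH₁ : ∀ x : ℝ, HasDerivAt H₁ (x / F₂ x) x) (hH₂ : ∀ x : ℝ, HasDerivAt H₂ (1 / F₂ x) x)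
    (a₁ a₂ : ℝ × ℝ → ℝ)
    (ha₁ : a₁ = fun p =>
      F₄ p.2 * F₂ p.1 * (c₁ + c₂ * p.1) - c₁ * F₄ p.2 * F₂ p.1 * H₁ p.1
        + c₁ * p.1 * F₄ p.2 * F₂ p.1 * H₂ p.1)
    (ha₂ : a₂ = fun p => F₂ p.1 * F₃ p.2) (p : ℝ × ℝ) :
    Dt a₂ p * Dx a₂ p - Dt (Dx a₂) p * a₂ p = 0 ∧
      integrabilityForm (fun n ↦ Dx^[n] a₁ p) (fun n ↦ Dx^[n] a₂ p) = 0 := by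
  set w := spatialFactor c₁ c₂ H₁ H₂
  have hw : ContDiff ℝ 3 w :=
    contDiff_spatialFactor c₁ c₂ (hF₂.of_le (by norm_num)) hF₂ne hH₁ hH₂
  have ha₁_separated : a₁ = fun p ↦ (F₂ * w) p.1 * F₄ p.2 := by
    funext p
    simp only [ha₁, w, spatialFactor, Pi.mul_apply]
    ring
  have hF₂w : F₂ * iteratedDeriv 2 w = fun _ ↦ c₁ :=
    mul_iteratedDeriv_two_spatialFactor c₁ c₂ hF₂ne hH₁ hH₂
  refine ⟨Dt_mul_Dx_sub_Dt_Dx_mul_eq_zero_of_separated (hF₂.of_le (by norm_num)) hF₃ ha₂ p, ?_⟩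
  rw [ha₁_separated, ha₂,
    integrabilityForm_Dx_iterate_fst_mul_snd (u := F₂ * w) (hF₂.mul hw) hF₂ hF₃ hF₄,
    integrabilityForm_iteratedDeriv_mul hF₂.contDiffAt hw.contDiffAt, hF₂w, deriv_const, mul_zero,
    mul_zero]

/-- The explicit coefficients
`a₁ = F₄(t) F₂(x)(c₁ + c₂ x) − c₁ F₄(t) F₂(x) ∫ x/F₂ + c₁ x F₄(t) F₂(x) ∫ 1/F₂` and
`a₂ = F₂(x) F₃(t)` satisfy the two integrability conditions of the
variable-coefficient DNLS equation. -/
theorem vcDNLS_integrability_conditions (F₂ F₃ F₄ : ℝ → ℝ) (c₁ c₂ : ℝ)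
    (hF₂ : ContDiff ℝ (⊤ : ℕ∞) F₂) (hF₃ : ContDiff ℝ (⊤ : ℕ∞) F₃) (hF₄ : ContDiff ℝ (⊤ : ℕ∞) F₄)
    (hF₂ne : ∀ x : ℝ, F₂ x ≠ 0)
    (H₁ H₂ : ℝ → ℝ)
    (hH₁ : ∀ x : ℝ, HasDerivAt H₁ (x / F₂ x) x)
    (hH₂ : ∀ x : ℝ, HasDerivAt H₂ (1 / F₂ x) x)
    (a₁ a₂ : ℝ × ℝ → ℝ)
    (ha₁ : a₁ = fun p =>
      F₄ p.2 * F₂ p.1 * (c₁ + c₂ * p.1) - c₁ * F₄ p.2 * F₂ p.1 * H₁ p.1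
        + c₁ * p.1 * F₄ p.2 * F₂ p.1 * H₂ p.1)
    (ha₂ : a₂ = fun p => F₂ p.1 * F₃ p.2) :
    ∀ p : ℝ × ℝ,
      (Dt a₂ p * Dx a₂ p - Dt (Dx a₂) p * a₂ p = 0)
      ∧ ((a₂ p) ^ 3 * Dx (Dx (Dx a₁)) p
          - 3 * (a₂ p) ^ 2 * Dx (Dx a₂) p * Dx a₁ p
          - 4 * (Dx a₂ p) ^ 3 * a₁ p
          + 5 * a₁ p * a₂ p * Dx a₂ p * Dx (Dx a₂) p
          + 4 * (Dx a₂ p) ^ 2 * a₂ p * Dx a₁ p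
          - (a₂ p) ^ 2 * a₁ p * Dx (Dx (Dx a₂)) p
          - 2 * Dx a₂ p * (a₂ p) ^ 2 * Dx (Dx a₁) p = 0) := fun p ↦
  vcDNLS_integrability_conditions_general F₂ F₃ F₄ c₁ c₂ (contDiff_infty.1 hF₂ 3)
    (hF₃.differentiable (by simp)) (hF₄.differentiable (by simp)) hF₂ne H₁ H₂ hH₁ hH₂
    a₁ a₂ ha₁ ha₂ p
end
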